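/- arXiv:1109.3814 — 5 statements merged into one kernel-verified Lean document; each statement's English description precedes it below -/
import Mathlib

section
/- The set of positive rational numbers T with 9/5 ≤ T ≤ 12/5 such that T·60³ is an integer divisible by 10 and (1/T)·60⁴ is an integer divisible by 10 has exactly 15 elements, and it equals {12/5, 64/27, 75/32, 125/54, 9/4, 20/9, 54/25, 32/15, 25/12, 81/40, 2, 48/25, 15/8, 50/27, 9/5}. -/
/-- A positive rational `T` satisfies the four-place multiple-of-10 criterion:
`T·60³` is an integer divisible by 10 and `(1/T)·60⁴` is an integer divisible by 10. -/
def FourPlaceMul10 (T : ℚ) : Prop :=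
  (∃ m : ℤ, T * 60 ^ 3 = 10 * m) ∧ (∃ n : ℤ, T⁻¹ * 60 ^ 4 = 10 * n)

theorem plimpton_aux0 : ((List.range 130).all fun a => (List.range 100).all fun b =>
    (27993600000 % (38880 + (100 * a + b)) != 0 || Nat.blt 51840 (38880 + (100 * a + b)) ||
    ([38880, 40000, 40500, 41472, 43200, 43740, 45000, 46080, 46656, 48000, 48600, 50000, 50625, 51200, 51840] : List ℕ).elem (38880 + (100 * a + b)))) = true := by
  decide +kernel

theorem plimpton_aux (a : ℕ) (ha : a < 130) (b : ℕ) (hb : b < 100)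
    (h : 27993600000 % (38880 + (100 * a + b)) = 0)
    (h' : 38880 + (100 * a + b) ≤ 51840) :
    38880 + (100 * a + b) ∈ ([38880, 40000, 40500, 41472, 43200, 43740, 45000, 46080, 46656, 48000, 48600, 50000, 50625, 51200, 51840] : List ℕ) := by
  have h1 := List.all_eq_true.1 (List.all_eq_true.1 plimpton_aux0 a (List.mem_range.2 ha)) b
    (List.mem_range.2 hb)
  rw [Bool.or_eq_true, Bool.or_eq_true] at h1
  rcases h1 with (h1 | h1) | h1
  · rw [h] at h1
    exact absurd h1 (by decide)
  · have := Nat.le_of_ble_eq_true h1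
    omega
  · exact List.mem_of_elem_eq_true h1

theorem plimpton_parameters :
    {T : ℚ | 0 < T ∧ 9/5 ≤ T ∧ T ≤ 12/5 ∧ FourPlaceMul10 T}.ncard = 15 ∧
    {T : ℚ | 0 < T ∧ 9/5 ≤ T ∧ T ≤ 12/5 ∧ FourPlaceMul10 T} =
      ({12/5, 64/27, 75/32, 125/54, 9/4, 20/9, 54/25, 32/15, 25/12, 81/40, 2,
        48/25, 15/8, 50/27, 9/5} : Set ℚ) := by
  have key : {T : ℚ | 0 < T ∧ 9/5 ≤ T ∧ T ≤ 12/5 ∧ FourPlaceMul10 T} =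
      ({12/5, 64/27, 75/32, 125/54, 9/4, 20/9, 54/25, 32/15, 25/12, 81/40, 2,
        48/25, 15/8, 50/27, 9/5} : Set ℚ) := by
    ext T
    simp only [Set.mem_ofPred_eq, Set.mem_insert_iff, Set.mem_singleton_iff]
    constructor
    · rintro ⟨h0, h1, h2, ⟨m, hm⟩, ⟨n, hn⟩⟩
      have hT : T = m / 21600 := by linarith
      have hm1 : (38880 : ℤ) ≤ m := by
        have : (38880 : ℚ) ≤ m := by linarith
        exact_mod_cast this
      have hm2 : m ≤ (51840 : ℤ) := by
        have : (m : ℚ) ≤ 51840 := by linarith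
        exact_mod_cast this
      have hmn : (m : ℚ) * n = 27993600000 := by
        have h : (T * 60 ^ 3) * (T⁻¹ * 60 ^ 4) = 60 ^ 7 := by
          field_simp
        rw [hm, hn] at h
        linarith
      have hmn' : m * n = 27993600000 := by exact_mod_cast hmn
      obtain ⟨k, rfl⟩ : ∃ k : ℕ, m = k := ⟨m.toNat, by omega⟩
      have hd : k ∣ 27993600000 := by
        have : (k : ℤ) ∣ ((27993600000 : ℕ) : ℤ) := ⟨n, by rw [hmn']; norm_num⟩
        exact_mod_cast this
      have hk : 38880 + (100 * ((k - 38880) / 100) + (k - 38880) % 100) = k := by omega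
      have := plimpton_aux ((k - 38880) / 100) (by omega) ((k - 38880) % 100) (by omega)
      rw [hk] at this
      have := this (Nat.mod_eq_zero_of_dvd hd) (by omega)
      simp only [List.mem_cons, List.not_mem_nil, or_false] at this
      subst hT
      rcases this with h | h | h | h | h | h | h | h | h | h | h | h | h | h | h <;>
        subst h <;> norm_num
    · have aux : ∀ (T : ℚ) (m n : ℤ), 0 < T → 9/5 ≤ T → T ≤ 12/5 → T * 60 ^ 3 = 10 * m →
          T⁻¹ * 60 ^ 4 = 10 * n → 0 < T ∧ 9/5 ≤ T ∧ T ≤ 12/5 ∧ FourPlaceMul10 T :=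
        fun T m n a b c d e => ⟨a, b, c, ⟨m, d⟩, ⟨n, e⟩⟩
      rintro (h | h | h | h | h | h | h | h | h | h | h | h | h | h | h) <;> subst h
      · exact aux _ 51840 540000 (by norm_num) (by norm_num) (by norm_num) (by norm_num) (by norm_num)
      · exact aux _ 51200 546750 (by norm_num) (by norm_num) (by norm_num) (by norm_num) (by norm_num)
      · exact aux _ 50625 552960 (by norm_num) (by norm_num) (by norm_num) (by norm_num) (by norm_num)
      · exact aux _ 50000 559872 (by norm_num) (by norm_num) (by norm_num) (by norm_num) (by norm_num)
      · exact aux _ 48600 576000 (by norm_num) (by norm_num) (by norm_num) (by norm_num) (by norm_num)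
      · exact aux _ 48000 583200 (by norm_num) (by norm_num) (by norm_num) (by norm_num) (by norm_num)
      · exact aux _ 46656 600000 (by norm_num) (by norm_num) (by norm_num) (by norm_num) (by norm_num)
      · exact aux _ 46080 607500 (by norm_num) (by norm_num) (by norm_num) (by norm_num) (by norm_num)
      · exact aux _ 45000 622080 (by norm_num) (by norm_num) (by norm_num) (by norm_num) (by norm_num)
      · exact aux _ 43740 640000 (by norm_num) (by norm_num) (by norm_num) (by norm_num) (by norm_num)
      · exact aux _ 43200 648000 (by norm_num) (by norm_num) (by norm_num) (by norm_num) (by norm_num)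
      · exact aux _ 41472 675000 (by norm_num) (by norm_num) (by norm_num) (by norm_num) (by norm_num)
      · exact aux _ 40500 691200 (by norm_num) (by norm_num) (by norm_num) (by norm_num) (by norm_num)
      · exact aux _ 40000 699840 (by norm_num) (by norm_num) (by norm_num) (by norm_num) (by norm_num)
      · exact aux _ 38880 720000 (by norm_num) (by norm_num) (by norm_num) (by norm_num) (by norm_num)
  refine ⟨?_, key⟩
  rw [key]
  have : ({12/5, 64/27, 75/32, 125/54, 9/4, 20/9, 54/25, 32/15, 25/12, 81/40, 2,
        48/25, 15/8, 50/27, 9/5} : Set ℚ) = (({12/5, 64/27, 75/32, 125/54, 9/4, 20/9, 54/25,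
        32/15, 25/12, 81/40, 2, 48/25, 15/8, 50/27, 9/5} : Finset ℚ) : Set ℚ) := by
    push_cast
    rfl
  rw [this, Set.ncard_coe_finset]
  decide +kernel
end

section
/- The set of positive rational numbers T with 9/5 ≤ T ≤ 12/5 such that T·60³ is an integer and (1/T)·60⁴ is an integer has exactly 21 elements: it is the union of the fifteen values {12/5, 64/27, 75/32, 125/54, 9/4, 20/9, 54/25, 32/15, 25/12, 81/40, 2, 48/25, 15/8, 50/27, 9/5} and the six values {288/125, 625/288, 135/64, 256/125, 125/64, 256/135}. -/
def mList : List ℕ := [518400, 512000, 506250, 500000, 486000, 480000, 466560, 460800, 450000, 437400, 432000, 414720, 405000, 400000, 388800, 497664, 468750, 455625, 442368, 421875, 409600]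

lemma mList_complete : ∀ a ∈ Finset.range 15, ∀ b ∈ Finset.range 8, ∀ c ∈ Finset.range 8,
    388800 ≤ 2 ^ a * 3 ^ b * 5 ^ c → 2 ^ a * 3 ^ b * 5 ^ c ≤ 518400 →
    2 ^ a * 3 ^ b * 5 ^ c ∈ mList := by
  decide +kernel

lemma mList_of_dvd (m : ℕ) (h : m ∣ 60 ^ 7) (h1 : 388800 ≤ m) (h2 : m ≤ 518400) :
    m ∈ mList := by
  have e : (60 : ℕ) ^ 7 = 2 ^ 14 * 3 ^ 7 * 5 ^ 7 := by norm_num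
  rw [e] at h
  obtain ⟨x, z, hx, hz, rfl⟩ := (Nat.dvd_mul).1 h
  obtain ⟨u, y, hu, hy, rfl⟩ := (Nat.dvd_mul).1 hx
  obtain ⟨a, ha, rfl⟩ := (Nat.dvd_prime_pow Nat.prime_two).1 hu
  obtain ⟨b, hb, rfl⟩ := (Nat.dvd_prime_pow Nat.prime_three).1 hy
  obtain ⟨c, hc, rfl⟩ := (Nat.dvd_prime_pow Nat.prime_five).1 hz
  exact mList_complete a (by simp; omega) b (by simp; omega) c (by simp; omega) h1 h2

lemma plimpton_aux_s1 :
    {T : ℚ | 0 < T ∧ 9/5 ≤ T ∧ T ≤ 12/5 ∧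
        (∃ m : ℤ, T * 60 ^ 3 = m) ∧ (∃ n : ℤ, T⁻¹ * 60 ^ 4 = n)} =
      ({12/5, 64/27, 75/32, 125/54, 9/4, 20/9, 54/25, 32/15, 25/12, 81/40, 2,
        48/25, 15/8, 50/27, 9/5} : Set ℚ) ∪
      ({288/125, 625/288, 135/64, 256/125, 125/64, 256/135} : Set ℚ) := by
  ext T
  simp only [Set.mem_setOf_eq, Set.mem_union, Set.mem_insert_iff, Set.mem_singleton_iff]
  constructor
  · rintro ⟨h0, h1, h2, ⟨m, hm⟩, ⟨n, hn⟩⟩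
    have hmn : m * n = 60 ^ 7 := by
      have : (m : ℚ) * n = 60 ^ 7 := by
        rw [← hm, ← hn]
        field_simp
        try norm_num
      exact_mod_cast this
    have l1 : 388800 ≤ m := by
      have : (388800 : ℚ) ≤ m := by rw [← hm]; linarith
      exact_mod_cast this
    have l2 : m ≤ 518400 := by
      have : (m : ℚ) ≤ 518400 := by rw [← hm]; linarith
      exact_mod_cast this
    have hT : T = (m : ℚ) / 60 ^ 3 := by rw [← hm]; field_simp
    lift m to ℕ using by omega
    have hd : m ∣ 60 ^ 7 := by
      have : (m : ℤ) ∣ ((60 ^ 7 : ℕ) : ℤ) := ⟨n, by rw [hmn]; norm_num⟩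
      exact_mod_cast this
    have hmem := mList_of_dvd m hd (by omega) (by omega)
    simp only [mList, List.mem_cons, List.not_mem_nil, or_false] at hmem
    rw [hT]
    clear hT hd l1 l2 hmn hm hn h0 h1 h2
    rcases hmem with rfl | rfl | rfl | rfl | rfl | rfl | rfl | rfl | rfl | rfl | rfl | rfl | rfl | rfl | rfl | rfl | rfl | rfl | rfl | rfl | rfl <;> norm_num
  · rintro ((rfl | rfl | rfl | rfl | rfl | rfl | rfl | rfl | rfl | rfl | rfl | rfl | rfl | rfl | rfl) | (rfl | rfl | rfl | rfl | rfl | rfl))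
    · exact ⟨by norm_num, by norm_num, by norm_num, ⟨518400, by norm_num⟩, ⟨5400000, by norm_num⟩⟩
    · exact ⟨by norm_num, by norm_num, by norm_num, ⟨512000, by norm_num⟩, ⟨5467500, by norm_num⟩⟩
    · exact ⟨by norm_num, by norm_num, by norm_num, ⟨506250, by norm_num⟩, ⟨5529600, by norm_num⟩⟩
    · exact ⟨by norm_num, by norm_num, by norm_num, ⟨500000, by norm_num⟩, ⟨5598720, by norm_num⟩⟩
    · exact ⟨by norm_num, by norm_num, by norm_num, ⟨486000, by norm_num⟩, ⟨5760000, by norm_num⟩⟩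
    · exact ⟨by norm_num, by norm_num, by norm_num, ⟨480000, by norm_num⟩, ⟨5832000, by norm_num⟩⟩
    · exact ⟨by norm_num, by norm_num, by norm_num, ⟨466560, by norm_num⟩, ⟨6000000, by norm_num⟩⟩
    · exact ⟨by norm_num, by norm_num, by norm_num, ⟨460800, by norm_num⟩, ⟨6075000, by norm_num⟩⟩
    · exact ⟨by norm_num, by norm_num, by norm_num, ⟨450000, by norm_num⟩, ⟨6220800, by norm_num⟩⟩
    · exact ⟨by norm_num, by norm_num, by norm_num, ⟨437400, by norm_num⟩, ⟨6400000, by norm_num⟩⟩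
    · exact ⟨by norm_num, by norm_num, by norm_num, ⟨432000, by norm_num⟩, ⟨6480000, by norm_num⟩⟩
    · exact ⟨by norm_num, by norm_num, by norm_num, ⟨414720, by norm_num⟩, ⟨6750000, by norm_num⟩⟩
    · exact ⟨by norm_num, by norm_num, by norm_num, ⟨405000, by norm_num⟩, ⟨6912000, by norm_num⟩⟩
    · exact ⟨by norm_num, by norm_num, by norm_num, ⟨400000, by norm_num⟩, ⟨6998400, by norm_num⟩⟩
    · exact ⟨by norm_num, by norm_num, by norm_num, ⟨388800, by norm_num⟩, ⟨7200000, by norm_num⟩⟩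
    · exact ⟨by norm_num, by norm_num, by norm_num, ⟨497664, by norm_num⟩, ⟨5625000, by norm_num⟩⟩
    · exact ⟨by norm_num, by norm_num, by norm_num, ⟨468750, by norm_num⟩, ⟨5971968, by norm_num⟩⟩
    · exact ⟨by norm_num, by norm_num, by norm_num, ⟨455625, by norm_num⟩, ⟨6144000, by norm_num⟩⟩
    · exact ⟨by norm_num, by norm_num, by norm_num, ⟨442368, by norm_num⟩, ⟨6328125, by norm_num⟩⟩
    · exact ⟨by norm_num, by norm_num, by norm_num, ⟨421875, by norm_num⟩, ⟨6635520, by norm_num⟩⟩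
    · exact ⟨by norm_num, by norm_num, by norm_num, ⟨409600, by norm_num⟩, ⟨6834375, by norm_num⟩⟩

theorem plimpton_four_place_pairs :
    {T : ℚ | 0 < T ∧ 9/5 ≤ T ∧ T ≤ 12/5 ∧
        (∃ m : ℤ, T * 60 ^ 3 = m) ∧ (∃ n : ℤ, T⁻¹ * 60 ^ 4 = n)}.ncard = 21 ∧
    {T : ℚ | 0 < T ∧ 9/5 ≤ T ∧ T ≤ 12/5 ∧
        (∃ m : ℤ, T * 60 ^ 3 = m) ∧ (∃ n : ℤ, T⁻¹ * 60 ^ 4 = n)} =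
      ({12/5, 64/27, 75/32, 125/54, 9/4, 20/9, 54/25, 32/15, 25/12, 81/40, 2,
        48/25, 15/8, 50/27, 9/5} : Set ℚ) ∪
      ({288/125, 625/288, 135/64, 256/125, 125/64, 256/135} : Set ℚ) := by
  refine ⟨?_, plimpton_aux_s1⟩
  rw [plimpton_aux_s1]
  have e : (({12/5, 64/27, 75/32, 125/54, 9/4, 20/9, 54/25, 32/15, 25/12, 81/40, 2,
        48/25, 15/8, 50/27, 9/5} : Set ℚ) ∪
      ({288/125, 625/288, 135/64, 256/125, 125/64, 256/135} : Set ℚ)) = ((({12/5, 64/27, 75/32, 125/54, 9/4, 20/9, 54/25, 32/15, 25/12, 81/40, 2, 48/25, 15/8, 50/27, 9/5, 288/125, 625/288, 135/64, 256/125, 125/64, 256/135} : Finset ℚ)) : Set ℚ) := by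
    ext x
    simp only [Set.mem_union, Set.mem_insert_iff, Set.mem_singleton_iff, Finset.coe_insert,
      Finset.coe_singleton, or_assoc]
  rw [e, Set.ncard_coe_finset]
  decide +kernel
end

section
/- The set of pairs (P, Q) of positive integers such that P and Q are coprime, both P and Q are regular, 1 ≤ Q < 60, and √2 − 1 < Q/P ≤ 5/9, is exactly the fifteen pairs {(12,5), (64,27), (75,32), (125,54), (9,4), (20,9), (54,25), (32,15), (25,12), (81,40), (2,1), (48,25), (15,8), (50,27), (9,5)}. -/
/-- A positive integer is regular if it has no prime factors other than 2, 3 and 5. -/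
def BabylonianRegular (n : ℕ) : Prop := ∀ p : ℕ, p.Prime → p ∣ n → p = 2 ∨ p = 3 ∨ p = 5

theorem reg_coprime (n : ℕ) (h : BabylonianRegular n) :
    Nat.Coprime n 49739411697975977335295857887194702284919462110895484347 := by
  apply Nat.coprime_of_dvd
  intro p hp h1 h2
  rcases h p hp h1 with rfl | rfl | rfl <;> revert h2 <;> norm_num

theorem reg_of_dvd (n : ℕ) (h : n ∣ 30 ^ 10) : BabylonianRegular n := by
  intro p hp h1
  have h2 : p ∣ 2 * (3 * 5) := hp.dvd_of_dvd_pow (h1.trans h)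
  rw [hp.dvd_mul, hp.dvd_mul, Nat.prime_dvd_prime_iff_eq hp (by norm_num),
    Nat.prime_dvd_prime_iff_eq hp (by norm_num),
    Nat.prime_dvd_prime_iff_eq hp (by norm_num)] at h2
  exact h2

theorem sqrt_iff (p q : ℕ) (hp : 0 < p) :
    Real.sqrt 2 - 1 < (q : ℝ) / (p : ℝ) ↔ 2 * p ^ 2 < (p + q) ^ 2 := by
  have hp' : (0 : ℝ) < p := by exact_mod_cast hp
  have e : (q : ℝ) / p = (p + q) / p - 1 := by field_simp; ring
  rw [e, sub_lt_sub_iff_right, Real.sqrt_lt' (by positivity), div_pow, lt_div_iff₀ (by positivity)]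
  exact_mod_cast Iff.rfl

theorem rat_iff (p q : ℕ) (hp : 0 < p) :
    (q : ℚ) / (p : ℚ) ≤ 5 / 9 ↔ 9 * q ≤ 5 * p := by
  have hp' : (0 : ℚ) < p := by exact_mod_cast hp
  rw [div_le_div_iff₀ hp' (by norm_num), mul_comm (q : ℚ)]
  exact_mod_cast Iff.rfl

set_option synthInstance.maxHeartbeats 400000 in
set_option synthInstance.maxSize 2000 in
theorem finite_check : ∀ q < 60, ∀ p < 145, (0 < q ∧ 9 * q ≤ 5 * p ∧ 2 * p ^ 2 < (p + q) ^ 2 ∧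
    Nat.gcd p q = 1 ∧ Nat.gcd q 49739411697975977335295857887194702284919462110895484347 = 1 ∧ Nat.gcd p 49739411697975977335295857887194702284919462110895484347 = 1) →
    (p, q) ∈ [(12,5), (64,27), (75,32), (125,54), (9,4), (20,9), (54,25), (32,15),
        (25,12), (81,40), (2,1), (48,25), (15,8), (50,27), (9,5)] := by
  decide +kernel

theorem plimpton_generating_pairs :
    {pq : ℕ × ℕ | 0 < pq.1 ∧ 0 < pq.2 ∧ Nat.Coprime pq.1 pq.2 ∧
        BabylonianRegular pq.1 ∧ BabylonianRegular pq.2 ∧ 1 ≤ pq.2 ∧ pq.2 < 60 ∧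
        Real.sqrt 2 - 1 < (pq.2 : ℝ) / (pq.1 : ℝ) ∧ (pq.2 : ℚ) / (pq.1 : ℚ) ≤ 5/9} =
      ({(12,5), (64,27), (75,32), (125,54), (9,4), (20,9), (54,25), (32,15),
        (25,12), (81,40), (2,1), (48,25), (15,8), (50,27), (9,5)} : Set (ℕ × ℕ)) := by
  ext ⟨p, q⟩
  simp only [Set.mem_ofPred_eq]
  constructor
  · rintro ⟨hp, hq, hc, rp, rq, -, hq2, h1, h2⟩
    rw [sqrt_iff p q hp] at h1
    rw [rat_iff p q hp] at h2
    have hb : p < 145 := by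
      by_contra hcon
      push Not at hcon
      nlinarith
    have := finite_check q hq2 p hb ⟨hq, h2, h1, hc, reg_coprime q rq, reg_coprime p rp⟩
    simpa using this
  · intro h
    simp only [Set.mem_insert_iff, Set.mem_singleton_iff, Prod.mk.injEq] at h
    rcases h with h | h | h | h | h | h | h | h | h | h | h | h | h | h | h <;>
    · obtain ⟨rfl, rfl⟩ := h
      refine ⟨by norm_num, by norm_num, by norm_num, reg_of_dvd _ (by norm_num),
        reg_of_dvd _ (by norm_num), by norm_num, by norm_num, ?_, ?_⟩
      · exact (sqrt_iff _ _ (by norm_num)).2 (by norm_num)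
      · exact (rat_iff _ _ (by norm_num)).2 (by norm_num)
end

section
/- The set of positive rational numbers T with 81/80 ≤ T ≤ 16/9 such that T·60³ is an integer divisible by 10 and (1/T)·60⁴ is an integer divisible by 10 has exactly 28 elements. -/
theorem lower_extension_28_rows_card :
    ((Finset.Icc 21870 38400).filter (fun m : ℕ => 27993600000 % m = 0)).card = 28 := by
  decide +kernel

theorem lower_extension_28_rows :
    {T : ℚ | 0 < T ∧ 81/80 ≤ T ∧ T ≤ 16/9 ∧ FourPlaceMul10 T}.ncard = 28 := by
  have h : {T : ℚ | 0 < T ∧ 81/80 ≤ T ∧ T ≤ 16/9 ∧ FourPlaceMul10 T} =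
      (fun m : ℕ => (m : ℚ) / 21600) ''
        (((Finset.Icc 21870 38400).filter (fun m : ℕ => 27993600000 % m = 0) : Finset ℕ) :
          Set ℕ) := by
    ext T
    simp only [Set.mem_ofPred_eq, Set.mem_image, Finset.mem_coe, Finset.mem_filter,
      Finset.mem_Icc]
    constructor
    · rintro ⟨h0, h1, h2, ⟨m, hm⟩, ⟨n, hn⟩⟩
      have hT : T = (m : ℚ) / 21600 := by linarith
      have hm1 : (21870 : ℚ) ≤ m := by linarith
      have hm2 : (m : ℚ) ≤ 38400 := by linarith
      have hmz1 : (21870 : ℤ) ≤ m := by exact_mod_cast hm1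
      have hmz2 : m ≤ (38400 : ℤ) := by exact_mod_cast hm2
      have hp : (27993600000 : ℚ) = m * n := by
        have h3 : (T * 60 ^ 3) * (T⁻¹ * 60 ^ 4) = 60 ^ 7 := by
          field_simp
        rw [hm, hn] at h3
        linarith
      have hpz : (27993600000 : ℤ) = m * n := by exact_mod_cast hp
      lift m to ℕ using by omega
      refine ⟨m, ⟨⟨by omega, by omega⟩, ?_⟩, by rw [hT]; simp⟩
      have hd : ((m : ℕ) : ℤ) ∣ ((27993600000 : ℕ) : ℤ) := ⟨n, by exact_mod_cast hpz⟩
      exact Nat.mod_eq_zero_of_dvd (Int.natCast_dvd_natCast.mp hd)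
    · rintro ⟨m, ⟨⟨h1, h2⟩, h3⟩, rfl⟩
      obtain ⟨n, hn⟩ := Nat.dvd_of_mod_eq_zero h3
      have hn' : (27993600000 : ℚ) = m * n := by exact_mod_cast hn
      have h1' : (21870 : ℚ) ≤ m := by exact_mod_cast h1
      have h2' : (m : ℚ) ≤ 38400 := by exact_mod_cast h2
      have hpos : (0 : ℚ) < m := by linarith
      refine ⟨by positivity, by linarith, by linarith, ⟨m, ?_⟩, ⟨n, ?_⟩⟩
      · push_cast
        ring
      · push_cast
        rw [inv_div, div_mul_eq_mul_div, div_eq_iff hpos.ne']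
        linarith
  rw [h, Set.ncard_image_of_injective, Set.ncard_coe_finset, lower_extension_28_rows_card]
  intro a b hab
  have hab' : (a : ℚ) / 21600 = (b : ℚ) / 21600 := hab
  have : (a : ℚ) = b := by linarith
  exact_mod_cast this
end

section
/- The set of positive rational numbers T with 5/2 ≤ T ≤ 125/32 such that T·60³ is an integer divisible by 10 and (1/T)·60⁴ is an integer divisible by 10 has exactly 24 elements. -/
/-- The exponent triples whose 5-smooth value lies in the required range. -/
def rowsM : Finset ℕ :=
  ((Finset.range 13 ×ˢ Finset.range 8 ×ˢ Finset.range 6).filter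
    (fun p => 54000 ≤ 2 ^ p.1 * (3 ^ p.2.1 * 5 ^ p.2.2) ∧
      2 ^ p.1 * (3 ^ p.2.1 * 5 ^ p.2.2) ≤ 84375)).image
    (fun p => 2 ^ p.1 * (3 ^ p.2.1 * 5 ^ p.2.2))

theorem rowsM_card : rowsM.card = 24 := by decide +kernel

theorem mem_rowsM (m : ℕ) :
    m ∈ rowsM ↔ 54000 ≤ m ∧ m ≤ 84375 ∧ m ∣ 27993600000 := by
  simp only [rowsM, Finset.mem_image, Finset.mem_filter, Finset.mem_product, Finset.mem_range,
    Prod.exists]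
  have hN : (27993600000 : ℕ) = 2 ^ 12 * (3 ^ 7 * 5 ^ 5) := by norm_num
  rw [hN]
  constructor
  · rintro ⟨a, b, c, ⟨⟨ha, hb, hc⟩, h1, h2⟩, rfl⟩
    exact ⟨h1, h2, mul_dvd_mul (pow_dvd_pow _ (by omega))
      (mul_dvd_mul (pow_dvd_pow _ (by omega)) (pow_dvd_pow _ (by omega)))⟩
  · rintro ⟨h1, h2, h⟩
    obtain ⟨x, y, hx, hy, rfl⟩ := (Nat.dvd_mul).1 h
    obtain ⟨y, z, hy1, hz, rfl⟩ := (Nat.dvd_mul).1 hy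
    obtain ⟨a, ha, rfl⟩ := (Nat.dvd_prime_pow Nat.prime_two).1 hx
    obtain ⟨b, hb, rfl⟩ := (Nat.dvd_prime_pow Nat.prime_three).1 hy1
    obtain ⟨c, hc, rfl⟩ := (Nat.dvd_prime_pow Nat.prime_five).1 hz
    exact ⟨a, b, c, ⟨⟨by omega, by omega, by omega⟩, h1, h2⟩, rfl⟩

theorem upper_extension_24_rows :
    {T : ℚ | 0 < T ∧ 5/2 ≤ T ∧ T ≤ 125/32 ∧ FourPlaceMul10 T}.ncard = 24 := by
  have key : {T : ℚ | 0 < T ∧ 5/2 ≤ T ∧ T ≤ 125/32 ∧ FourPlaceMul10 T} =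
      (fun m : ℕ => (m : ℚ) / 21600) '' (rowsM : Set ℕ) := by
    ext T
    simp only [Set.mem_ofPred_eq, Set.mem_image, Finset.mem_coe, mem_rowsM, FourPlaceMul10]
    constructor
    · rintro ⟨h0, h1, h2, ⟨m, hm⟩, n, hn⟩
      have hT : T = (m : ℚ) / 21600 := by linarith
      have hm1 : (54000 : ℚ) ≤ m := by linarith
      have hm2 : (m : ℚ) ≤ 84375 := by linarith
      have hm1' : (54000 : ℤ) ≤ m := by exact_mod_cast hm1
      have hm2' : m ≤ (84375 : ℤ) := by exact_mod_cast hm2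
      have hmn : (m : ℚ) * n = 27993600000 := by
        have : T * T⁻¹ = 1 := mul_inv_cancel₀ h0.ne'
        have e : (T * 60 ^ 3) * (T⁻¹ * 60 ^ 4) = 60 ^ 7 := by linear_combination 60 ^ 7 * this
        rw [hm, hn] at e
        linarith
      have hmn' : m * n = 27993600000 := by exact_mod_cast hmn
      lift m to ℕ using by omega
      refine ⟨m, ⟨by omega, by omega, ?_⟩, by rw [hT]; simp⟩
      have : (m : ℤ) ∣ ((27993600000 : ℕ) : ℤ) := ⟨n, by rw [hmn']; rfl⟩
      exact_mod_cast this
    · rintro ⟨m, ⟨h1, h2, n, hn⟩, rfl⟩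
      have h1' : (54000 : ℚ) ≤ m := by exact_mod_cast h1
      have h2' : (m : ℚ) ≤ 84375 := by exact_mod_cast h2
      have hn' : (27993600000 : ℚ) = m * n := by exact_mod_cast hn
      have hm0 : (m : ℚ) ≠ 0 := by linarith
      refine ⟨by linarith, by linarith, by linarith, ⟨m, ?_⟩, n, ?_⟩
      · push_cast; ring
      · push_cast
        rw [inv_div, div_mul_eq_mul_div, div_eq_iff hm0]
        linear_combination 10 * hn'
  rw [key, Set.ncard_image_of_injective, Set.ncard_coe_finset, rowsM_card]
  intro a b h
  have h' : (a : ℚ) / 21600 = (b : ℚ) / 21600 := h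
  have : (a : ℚ) = b := by linarith
  exact_mod_cast this
end
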